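/- Let V be a finite-dimensional K-vector space with a direct sum decomposition V = ⊕_{l=0}^{L} V_l, and let f_1,…,f_r be K-linear endomorphisms of V such that f_i(V_l) ⊆ ⊕_{u=l+1}^{L} V_u for all i and l (in particular f_i(V_L) = 0). Then: (i) every composition f_{i_{L+1}} ∘ ⋯ ∘ f_{i_1} of L+1 of these maps is the zero map, so that V carries a (unique) Λ-module structure M in which the image of the generator X_i acts as f_i; (ii) J^l M ⊆ ⊕_{u=l}^{L} V_u for all 0 ≤ l ≤ L; consequently (dim_K V_0,…,dim_K V_L) ≼ rad(M) in the dominance order. -/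

import Mathlib

noncomputable section

/-- The relation on the free algebra killing all products of `L+1` generators. -/
def TruncRel (K : Type*) [Field K] (r L : ℕ) :
    FreeAlgebra K (Fin r) → FreeAlgebra K (Fin r) → Prop := fun a b =>
  (∃ f : Fin (L + 1) → Fin r, a = (List.ofFn fun j => FreeAlgebra.ι K (f j)).prod) ∧ b = 0

/-- The local truncated path algebra with `r` loops and Loewy length `L+1`:
the quotient of `K⟨X_1,…,X_r⟩` by the two-sided ideal generated by all products
of `L+1` generators. -/
def TruncAlg (K : Type*) [Field K] (r L : ℕ) : Type _ := RingQuot (TruncRel K r L)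

instance (K : Type*) [Field K] (r L : ℕ) : Ring (TruncAlg K r L) :=
  inferInstanceAs (Ring (RingQuot _))

instance (K : Type*) [Field K] (r L : ℕ) : Algebra K (TruncAlg K r L) :=
  inferInstanceAs (Algebra K (RingQuot _))

/-- The images of the generators `X i` in the truncated algebra. -/
def gen (K : Type*) [Field K] (r L : ℕ) (i : Fin r) : TruncAlg K r L :=
  RingQuot.mkAlgHom K (TruncRel K r L) (FreeAlgebra.ι K i)

/-- The two-sided ideal `J` of `Λ` generated by the images of `X_1,…,X_r`,
realized as a `K`-submodule of `Λ`. -/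
def Jrad (K : Type*) [Field K] (r L : ℕ) : Submodule K (TruncAlg K r L) :=
  ⊤ * Submodule.span K (Set.range (gen K r L)) * ⊤

/-- `J^l M`, the submodule of `M` given by the action of `J^l`. -/
def jpow (K : Type*) [Field K] (r L : ℕ) (M : Type*) [AddCommGroup M] [Module K M]
    [Module (TruncAlg K r L) M] [IsScalarTower K (TruncAlg K r L) M] (l : ℕ) :
    Submodule (TruncAlg K r L) M :=
  Submodule.span (TruncAlg K r L)
    {x : M | ∃ a ∈ (Jrad K r L ^ l : Submodule K (TruncAlg K r L)), ∃ m : M, x = a • m}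

/-- The socle of a module: the supremum of all simple submodules. -/
def socle (R N : Type*) [Ring R] [AddCommGroup N] [Module R N] : Submodule R N :=
  sSup {p : Submodule R N | IsSimpleModule R ↥p}

/-- The socle series: `socSeries R M l` is `soc_{l-1} M`, so `socSeries R M 0 = soc_{-1} M = ⊥`
and `socSeries R M (l+1) = soc_l M` is the preimage in `M` of `soc (M / soc_{l-1} M)`. -/
def socSeries (R M : Type*) [Ring R] [AddCommGroup M] [Module R M] : ℕ → Submodule R M
  | 0 => ⊥
  | l + 1 => Submodule.comap (socSeries R M l).mkQ (socle R (M ⧸ socSeries R M l))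

/-- Dimension of the subquotient `q / (p ⊓ q)`; for `p ≤ q` this is `dim (q/p)`. -/
def quotDim (K M : Type*) [Field K] [AddCommGroup M] [Module K M]
    (p q : Submodule K M) : ℕ :=
  Module.finrank K (↥q ⧸ Submodule.comap q.subtype p)

/-- The radical layering `rad(M) = (dim_K J^l M / J^{l+1} M)_{l=0,…,L}`. -/
def radLayering (K : Type*) [Field K] (r L : ℕ) (M : Type*) [AddCommGroup M] [Module K M]
    [Module (TruncAlg K r L) M] [IsScalarTower K (TruncAlg K r L) M] : Fin (L + 1) → ℕ :=
  fun l => quotDim K M ((jpow K r L M ((l : ℕ) + 1)).restrictScalars K)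
    ((jpow K r L M (l : ℕ)).restrictScalars K)

/-- The socle layering `socseq(M) = (dim_K soc_l M / soc_{l-1} M)_{l=0,…,L}`. -/
def socLayering (K : Type*) [Field K] (r L : ℕ) (M : Type*) [AddCommGroup M] [Module K M]
    [Module (TruncAlg K r L) M] [IsScalarTower K (TruncAlg K r L) M] : Fin (L + 1) → ℕ :=
  fun l => quotDim K M ((socSeries (TruncAlg K r L) M (l : ℕ)).restrictScalars K)
    ((socSeries (TruncAlg K r L) M ((l : ℕ) + 1)).restrictScalars K)

/-- The dominance order on `ℕ^{L+1}`: `a ≼ b` iff all partial sums satisfy `≤`. -/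
def DomLE (L : ℕ) (a b : Fin (L + 1) → ℕ) : Prop :=
  ∀ l : Fin (L + 1), ∑ j ∈ Finset.Iic l, a j ≤ ∑ j ∈ Finset.Iic l, b j

/-- `reverse (a_0, …, a_L) = (a_L, …, a_0)`. -/
def revTuple (L : ℕ) (a : Fin (L + 1) → ℕ) : Fin (L + 1) → ℕ := fun l => a l.rev

/-- Given a `K`-algebra morphism `φ : Λ → End_K V` (a `Λ`-module structure on `V`),
the `K`-subspace `J^l V = {Σ φ(a_i)(m_i) | a_i ∈ J^l}`. -/
def phiLayer (K : Type*) [Field K] (r L : ℕ) (V : Type*) [AddCommGroup V] [Module K V]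
    (φ : TruncAlg K r L →ₐ[K] Module.End K V) (l : ℕ) : Submodule K V :=
  Submodule.span K
    {x : V | ∃ a ∈ (Jrad K r L ^ l : Submodule K (TruncAlg K r L)), ∃ m : V, x = φ a m}

/-- The radical layering of the `Λ`-module structure on `V` given by `φ`. -/
def phiRad (K : Type*) [Field K] (r L : ℕ) (V : Type*) [AddCommGroup V] [Module K V]
    (φ : TruncAlg K r L →ₐ[K] Module.End K V) : Fin (L + 1) → ℕ :=
  fun l => quotDim K V (phiLayer K r L V φ ((l : ℕ) + 1)) (phiLayer K r L V φ (l : ℕ))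

section helpers

variable {K : Type} [Field K] {r L : ℕ} {V : Type} [AddCommGroup V] [Module K V]

/-- The filtration by tails of the decomposition. -/
def tailF (Vsub : Fin (L + 1) → Submodule K V) (n : ℕ) : Submodule K V :=
  ⨆ (u : Fin (L + 1)) (_ : n ≤ (u : ℕ)), Vsub u

theorem tailF_anti (Vsub : Fin (L + 1) → Submodule K V) {m n : ℕ} (h : m ≤ n) :
    tailF Vsub n ≤ tailF Vsub m := by
  refine iSup₂_le fun u hu => ?_
  exact le_iSup₂_of_le u (h.trans hu) le_rfl

theorem tailF_zero (Vsub : Fin (L + 1) → Submodule K V) (hdec : DirectSum.IsInternal Vsub) :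
    tailF Vsub 0 = ⊤ := by
  rw [eq_top_iff, ← hdec.submodule_iSup_eq_top]
  exact iSup_le fun u => le_iSup₂_of_le u (Nat.zero_le _) le_rfl

theorem tailF_last (Vsub : Fin (L + 1) → Submodule K V) :
    tailF Vsub (L + 1) = ⊥ := by
  rw [eq_bot_iff]
  refine iSup₂_le fun u hu => ?_
  have := u.2
  omega

theorem tailF_map (Vsub : Fin (L + 1) → Submodule K V) (f : Fin r → Module.End K V)
    (hf : ∀ (i : Fin r) (l : Fin (L + 1)),
      (Vsub l).map (f i) ≤ ⨆ (u : Fin (L + 1)) (_ : l < u), Vsub u) (i : Fin r) (n : ℕ)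
    (v : V) (hv : v ∈ tailF Vsub n) : f i v ∈ tailF Vsub (n + 1) := by
  have : tailF Vsub n ≤ (tailF Vsub (n + 1)).comap (f i) := by
    refine iSup₂_le fun u hu => ?_
    rw [← Submodule.map_le_iff_le_comap]
    refine (hf i u).trans (iSup₂_le fun w hw => ?_)
    refine le_iSup₂_of_le w ?_ le_rfl
    have : (u : ℕ) < w := hw
    omega
  exact this hv

theorem tailF_list (Vsub : Fin (L + 1) → Submodule K V) (hdec : DirectSum.IsInternal Vsub)
    (f : Fin r → Module.End K V)
    (hf : ∀ (i : Fin r) (l : Fin (L + 1)),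
      (Vsub l).map (f i) ≤ ⨆ (u : Fin (L + 1)) (_ : l < u), Vsub u) (l : List (Fin r)) (v : V) :
    (l.map f).prod v ∈ tailF Vsub l.length := by
  induction l with
  | nil => simp [tailF_zero Vsub hdec]
  | cons a l ih =>
    rw [List.map_cons, List.prod_cons, List.length_cons]
    exact tailF_map Vsub f hf a _ _ ih

/-- Elements of the algebra raising the filtration by `k`. -/
def raise (Vsub : Fin (L + 1) → Submodule K V) (φ : TruncAlg K r L →ₐ[K] Module.End K V) (k : ℕ) :
    Submodule K (TruncAlg K r L) where
  carrier := {a | ∀ n, ∀ v ∈ tailF Vsub n, φ a v ∈ tailF Vsub (n + k)}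
  add_mem' := by
    intro a b ha hb n v hv
    rw [map_add]
    exact Submodule.add_mem _ (ha n v hv) (hb n v hv)
  zero_mem' := by
    intro n v hv
    rw [map_zero]
    exact Submodule.zero_mem _
  smul_mem' := by
    intro c a ha n v hv
    rw [map_smul]
    exact Submodule.smul_mem _ _ (ha n v hv)

theorem raise_mul (Vsub : Fin (L + 1) → Submodule K V) (φ : TruncAlg K r L →ₐ[K] Module.End K V)
    (k m : ℕ) : raise Vsub φ k * raise Vsub φ m ≤ raise Vsub φ (m + k) := by
  rw [Submodule.mul_le]
  intro a ha b hb n v hv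
  rw [map_mul, ← add_assoc]
  exact ha _ _ (hb n v hv)

theorem raise_top (Vsub : Fin (L + 1) → Submodule K V) (φ : TruncAlg K r L →ₐ[K] Module.End K V)
    (h : ∀ i, gen K r L i ∈ raise Vsub φ 1) : (⊤ : Submodule K (TruncAlg K r L)) ≤ raise Vsub φ 0 := by
  intro a _
  obtain ⟨x, rfl⟩ := RingQuot.mkAlgHom_surjective K (TruncRel K r L) a
  induction x using FreeAlgebra.induction with
  | grade0 c =>
    intro n v hv
    have : φ (RingQuot.mkAlgHom K (TruncRel K r L) (algebraMap K _ c)) = algebraMap K _ c := by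
      rw [AlgHom.commutes]; exact φ.commutes c
    erw [this]
    exact Submodule.smul_mem _ _ hv
  | grade1 i => 
    intro n v hv
    exact tailF_anti Vsub (Nat.le_succ _) (h i n v hv)
  | mul a b ha hb =>
    rw [map_mul]
    exact raise_mul Vsub φ 0 0 (Submodule.mul_mem_mul (ha trivial) (hb trivial))
  | add a b ha hb =>
    rw [map_add]
    exact Submodule.add_mem _ (ha trivial) (hb trivial)

theorem raise_J (Vsub : Fin (L + 1) → Submodule K V) (φ : TruncAlg K r L →ₐ[K] Module.End K V)
    (h : ∀ i, gen K r L i ∈ raise Vsub φ 1) : Jrad K r L ≤ raise Vsub φ 1 := by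
  have h1 : Submodule.span K (Set.range (gen K r L)) ≤ raise Vsub φ 1 := by
    rw [Submodule.span_le]
    rintro _ ⟨i, rfl⟩
    exact h i
  have ht := raise_top Vsub φ h
  refine (mul_le_mul' (mul_le_mul' ht h1) ht).trans ?_
  exact (mul_le_mul' (raise_mul Vsub φ 0 1) le_rfl).trans (raise_mul Vsub φ 1 0)

theorem raise_pow (Vsub : Fin (L + 1) → Submodule K V) (φ : TruncAlg K r L →ₐ[K] Module.End K V)
    (h : ∀ i, gen K r L i ∈ raise Vsub φ 1) (l : ℕ) : Jrad K r L ^ l ≤ raise Vsub φ l := by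
  induction l with
  | zero => exact le_top.trans (raise_top Vsub φ h)
  | succ l ih =>
    rw [pow_succ']
    exact (mul_le_mul' (raise_J Vsub φ h) ih).trans (raise_mul Vsub φ 1 l)

theorem layer_le (Vsub : Fin (L + 1) → Submodule K V) (hdec : DirectSum.IsInternal Vsub)
    (φ : TruncAlg K r L →ₐ[K] Module.End K V)
    (h : ∀ i, gen K r L i ∈ raise Vsub φ 1) (l : ℕ) : phiLayer K r L V φ l ≤ tailF Vsub l := by
  unfold phiLayer
  rw [Submodule.span_le]
  rintro _ ⟨a, ha, m, rfl⟩
  have := raise_pow Vsub φ h l ha 0 m (by rw [tailF_zero Vsub hdec]; trivial)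
  rwa [zero_add] at this

theorem layer_zero (φ : TruncAlg K r L →ₐ[K] Module.End K V) : phiLayer K r L V φ 0 = ⊤ := by
  rw [eq_top_iff]
  intro v _
  refine Submodule.subset_span ⟨1, ?_, v, by simp⟩
  rw [pow_zero]
  exact Submodule.one_le.mp le_rfl

theorem layer_succ (φ : TruncAlg K r L →ₐ[K] Module.End K V) (l : ℕ) :
    phiLayer K r L V φ (l + 1) ≤ phiLayer K r L V φ l := by
  conv_lhs => unfold phiLayer
  rw [Submodule.span_le]
  rintro _ ⟨a, ha, m, rfl⟩
  rw [pow_succ] at ha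
  induction ha using Submodule.mul_induction_on' with
  | mem_mul_mem b hb c hc =>
    refine Submodule.subset_span ⟨b, hb, φ c m, ?_⟩
    rw [map_mul]; rfl
  | add x hx y hy h1 h2 =>
    rw [map_add]
    exact Submodule.add_mem _ h1 h2

theorem quotDim_add [FiniteDimensional K V] (p q : Submodule K V) (h : p ≤ q) :
    quotDim K V p q + Module.finrank K p = Module.finrank K q := by
  unfold quotDim
  rw [← (Submodule.comapSubtypeEquivOfLe h).finrank_eq]
  exact Submodule.finrank_quotient_add_finrank _

theorem layer_sum [FiniteDimensional K V] (φ : TruncAlg K r L →ₐ[K] Module.End K V) (n : ℕ) :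
    ∑ j ∈ Finset.range n, quotDim K V (phiLayer K r L V φ (j + 1)) (phiLayer K r L V φ j)
      + Module.finrank K (phiLayer K r L V φ n) = Module.finrank K V := by
  induction n with
  | zero => rw [layer_zero]; simp
  | succ n ih =>
    rw [Finset.sum_range_succ, add_assoc, quotDim_add _ _ (layer_succ φ n), ih]

theorem tailF_finrank [FiniteDimensional K V] (Vsub : Fin (L + 1) → Submodule K V)
    (hdec : DirectSum.IsInternal Vsub) (l : Fin (L + 1)) :
    ∑ j ∈ Finset.Iic l, Module.finrank K (Vsub j) + Module.finrank K (tailF Vsub ((l : ℕ) + 1))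
      ≤ Module.finrank K V := by
  have h1 : Module.finrank K V = ∑ j, Module.finrank K (Vsub j) := by
    rw [← (LinearEquiv.ofBijective (DirectSum.coeLinearMap Vsub) hdec).finrank_eq]
    exact Module.finrank_directSum (R := K) (fun j => Vsub j)
  have h2 : ∀ s : Finset (Fin (L + 1)), Module.finrank K (s.sup Vsub : Submodule K V)
      ≤ ∑ j ∈ s, Module.finrank K (Vsub j) := by
    intro s
    induction s using Finset.induction_on with
    | empty => simp
    | insert a s ha ih =>
      rw [Finset.sup_insert, Finset.sum_insert ha]
      exact (Submodule.finrank_add_le_finrank_add_finrank _ _).trans (by omega)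
  have h3 : tailF Vsub ((l : ℕ) + 1) ≤ (Finset.Iic l)ᶜ.sup Vsub := by
    refine iSup₂_le fun u hu => Finset.le_sup (f := Vsub) ?_
    simp only [Finset.mem_compl, Finset.mem_Iic, not_le]
    exact hu
  have h4 := (Submodule.finrank_mono h3).trans (h2 _)
  rw [h1, ← Finset.sum_add_sum_compl (Finset.Iic l)]
  omega

theorem sum_Iic_fin (l : Fin (L + 1)) (g : ℕ → ℕ) :
    ∑ j ∈ Finset.Iic l, g (j : ℕ) = ∑ j ∈ Finset.range ((l : ℕ) + 1), g j := by
  have : Finset.range ((l : ℕ) + 1) = (Finset.Iic l).map Fin.valEmbedding := by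
    rw [Fin.map_valEmbedding_Iic]
    ext; simp
  rw [this, Finset.sum_map]
  rfl

end helpers

/-- Let `V = ⊕_{l=0}^L V_l` and `f_1,…,f_r` endomorphisms with
`f_i(V_l) ⊆ ⊕_{u>l} V_u`. Then (i) every composition of `L+1` of the `f_i` vanishes, so `V`
carries a unique `Λ`-module structure in which the generator `X_i` acts as `f_i`;
(ii) for this structure, `J^l V ⊆ ⊕_{u≥l} V_u` for all `0 ≤ l ≤ L`, and consequently
`(dim V_0,…,dim V_L) ≼ rad(V)` in the dominance order. -/
theorem stmt14 (K : Type) [Field K] [IsAlgClosed K] (r L : ℕ) (hr : 0 < r) (hL : 0 < L)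
    (V : Type) [AddCommGroup V] [Module K V] [FiniteDimensional K V]
    (Vsub : Fin (L + 1) → Submodule K V) (hdec : DirectSum.IsInternal Vsub)
    (f : Fin r → Module.End K V)
    (hf : ∀ (i : Fin r) (l : Fin (L + 1)),
      (Vsub l).map (f i) ≤ ⨆ (u : Fin (L + 1)) (_ : l < u), Vsub u) :
    (∀ g : Fin (L + 1) → Fin r, (List.ofFn fun j => f (g j)).prod = 0) ∧
    (∃! φ : TruncAlg K r L →ₐ[K] Module.End K V, ∀ i, φ (gen K r L i) = f i) ∧
    (∀ φ : TruncAlg K r L →ₐ[K] Module.End K V, (∀ i, φ (gen K r L i) = f i) →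
      (∀ l : Fin (L + 1),
        phiLayer K r L V φ (l : ℕ) ≤ ⨆ (u : Fin (L + 1)) (_ : l ≤ u), Vsub u) ∧
      DomLE L (fun l => Module.finrank K ↥(Vsub l)) (phiRad K r L V φ)) := by
  have h0 : ∀ g : Fin (L + 1) → Fin r, (List.ofFn fun j => f (g j)).prod = 0 := by
    intro g
    ext v
    have h := tailF_list Vsub hdec f hf (List.ofFn g) v
    rw [List.length_ofFn, tailF_last, Submodule.mem_bot, List.map_ofFn] at h
    exact h
  refine ⟨h0, ?_, ?_⟩
  · refine ⟨RingQuot.liftAlgHom K ⟨FreeAlgebra.lift K f, ?_⟩, ?_, ?_⟩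
    · rintro _ _ ⟨⟨g, rfl⟩, rfl⟩
      rw [map_zero, map_list_prod, List.map_ofFn, ← h0 g]
      congr 2
      funext j
      simp
    · intro i
      unfold gen
      erw [RingQuot.liftAlgHom_mkAlgHom_apply]
      simp
    · intro ψ hψ
      refine RingQuot.ringQuot_ext' K _ _ ?_
      refine FreeAlgebra.hom_ext ?_
      funext i
      refine (hψ i).trans ?_
      symm
      simp
  · intro φ hφ
    have hg : ∀ i, gen K r L i ∈ raise Vsub φ 1 := by
      intro i n v hv
      rw [hφ]
      exact tailF_map Vsub f hf i n v hv
    refine ⟨fun l => layer_le Vsub hdec φ hg l, fun l => ?_⟩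
    have h1 := tailF_finrank Vsub hdec l
    have h2 := layer_sum φ ((l : ℕ) + 1)
    have h3 := Submodule.finrank_mono (layer_le Vsub hdec φ hg ((l : ℕ) + 1))
    rw [← sum_Iic_fin l (fun j => quotDim K V (phiLayer K r L V φ (j + 1)) (phiLayer K r L V φ j))] at h2
    unfold phiRad
    beta_reduce at h2 ⊢
    omega
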